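/- The map A ↦ (X ↦ A X A*) is a surjective group homomorphism from Sp(3) onto F_{4,ℍ} with kernel {E, −E}; consequently F_{4,ℍ} is isomorphic to Sp(3)/{E, −E}. -/

import Mathlib

/-!
Statement 3: The map A ↦ (X ↦ A X A*) is a surjective group homomorphism from Sp(3)
onto F_{4,ℍ} with kernel {E, −E}; consequently F_{4,ℍ} ≅ Sp(3)/{E, −E}.

Here J_ℍ is the real Jordan algebra of 3×3 ℍ-Hermitian matrices with X ∘ Y = ½(XY+YX),
F_{4,ℍ} its group of ℝ-linear Jordan automorphisms, and Sp(3) the quaternionic unitary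
group {A ∈ M(3,ℍ) | A A* = E}.
-/

noncomputable section

open Matrix

abbrev HR : Type := Quaternion ℝ

lemma star_rsmul (r : ℝ) (q : HR) : star (r • q) = r • star q :=
  QuaternionAlgebra.star_smul r q

lemma conjTranspose_rsmul (r : ℝ) (M : Matrix (Fin 3) (Fin 3) HR) :
    (r • M)ᴴ = r • Mᴴ :=
  Matrix.ext fun i j => by simp [conjTranspose_apply, star_rsmul]

/-- The Jordan algebra J_ℍ of 3×3 ℍ-Hermitian matrices, as an ℝ-submodule of the
3×3 matrices over ℍ. -/
def JH : Submodule ℝ (Matrix (Fin 3) (Fin 3) HR) where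
  carrier := {X | Xᴴ = X}
  add_mem' := fun {X Y} hX hY => by
    simp only [Set.mem_setOf_eq] at *
    rw [conjTranspose_add, hX, hY]
  zero_mem' := by simp [Set.mem_setOf_eq]
  smul_mem' := fun r X hX => by
    simp only [Set.mem_setOf_eq] at *
    rw [conjTranspose_rsmul, hX]

lemma mem_JH {X : Matrix (Fin 3) (Fin 3) HR} : X ∈ JH ↔ Xᴴ = X := Iff.rfl

/-- the Jordan multiplication X ∘ Y = ½(XY + YX). -/
def jmulR (X Y : JH) : JH :=
  ⟨(2⁻¹ : ℝ) • ((X : Matrix (Fin 3) (Fin 3) HR) * (Y : Matrix (Fin 3) (Fin 3) HR)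
      + (Y : Matrix (Fin 3) (Fin 3) HR) * (X : Matrix (Fin 3) (Fin 3) HR)), by
    have hX : ((X : Matrix (Fin 3) (Fin 3) HR))ᴴ = X := X.2
    have hY : ((Y : Matrix (Fin 3) (Fin 3) HR))ᴴ = Y := Y.2
    rw [mem_JH, conjTranspose_rsmul, conjTranspose_add, conjTranspose_mul,
      conjTranspose_mul, hX, hY, add_comm]⟩

/-- The group F_{4,ℍ} of ℝ-linear Jordan automorphisms of J_ℍ. -/
def F4H : Subgroup (JH ≃ₗ[ℝ] JH) where
  carrier := {α | ∀ X Y, α (jmulR X Y) = jmulR (α X) (α Y)}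
  one_mem' := fun _ _ => rfl
  mul_mem' := fun {a b} ha hb X Y => by
    have h1 : ∀ Z, (a * b) Z = a (b Z) := fun _ => rfl
    rw [h1, h1, h1, hb X Y, ha (b X) (b Y)]
  inv_mem' := fun {a} ha X Y => by
    have h1 : ∀ Z, (a⁻¹ : JH ≃ₗ[ℝ] JH) Z = a.symm Z := fun _ => rfl
    rw [h1, h1, h1]
    have h := ha (a.symm X) (a.symm Y)
    rw [a.apply_symm_apply, a.apply_symm_apply] at h
    rw [← h, a.symm_apply_apply]

open scoped Quaternion

def qI : HR := ⟨0,1,0,0⟩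
def qJ : HR := ⟨0,0,1,0⟩
def qK : HR := ⟨0,0,0,1⟩
@[simp] lemma qI_re : qI.re = 0 := rfl
@[simp] lemma qI_i : qI.imI = 1 := rfl
@[simp] lemma qI_j : qI.imJ = 0 := rfl
@[simp] lemma qI_k : qI.imK = 0 := rfl
@[simp] lemma qJ_re : qJ.re = 0 := rfl
@[simp] lemma qJ_i : qJ.imI = 0 := rfl
@[simp] lemma qJ_j : qJ.imJ = 1 := rfl
@[simp] lemma qJ_k : qJ.imK = 0 := rfl
@[simp] lemma qK_re : qK.re = 0 := rfl
@[simp] lemma qK_i : qK.imI = 0 := rfl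
@[simp] lemma qK_j : qK.imJ = 0 := rfl
@[simp] lemma qK_k : qK.imK = 1 := rfl

lemma rsmul_one (r : ℝ) : r • (1 : HR) = (r : HR) := by
  apply Quaternion.ext <;> simp

abbrev M3 := Matrix (Fin 3) (Fin 3) HR

lemma sp_mul (A : unitary M3) : star A.1 * A.1 = 1 := (Unitary.mem_iff.1 A.2).1
lemma sp_mul' (A : unitary M3) : A.1 * star A.1 = 1 := (Unitary.mem_iff.1 A.2).2

/-- The twisting map as a linear map of `JH`. -/
def conjLin (A : M3) : JH →ₗ[ℝ] JH where
  toFun X := ⟨A * X.1 * star A, by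
    have hX : star X.1 = X.1 := X.2
    change star (A * X.1 * star A) = _
    simp only [star_mul, star_star, hX, mul_assoc]⟩
  map_add' X Y := by
    apply Subtype.ext
    simp [mul_add, add_mul]
  map_smul' r X := by
    apply Subtype.ext
    simp

lemma conjLin_mul (A B : M3) (X : JH) : conjLin A (conjLin B X) = conjLin (A * B) X := by
  apply Subtype.ext
  simp [conjLin, mul_assoc]

lemma conjLin_one (X : JH) : conjLin 1 X = X := by
  apply Subtype.ext
  simp [conjLin]

def conjEquiv (A : unitary M3) : JH ≃ₗ[ℝ] JH :=
  LinearEquiv.ofLinearMap (conjLin A.1) (conjLin (star A.1))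
    (by ext1 X; simp only [LinearMap.comp_apply, conjLin_mul, sp_mul', conjLin_one, LinearMap.id_apply])
    (by ext1 X; simp only [LinearMap.comp_apply, conjLin_mul, sp_mul, conjLin_one, LinearMap.id_apply])

lemma conjEquiv_apply (A : unitary M3) (X : JH) :
    (conjEquiv A X).1 = A.1 * X.1 * star A.1 := rfl

lemma conjEquiv_mem (A : unitary M3) : conjEquiv A ∈ F4H := by
  intro X Y
  apply Subtype.ext
  have h : ∀ P Q : M3, A.1 * P * star A.1 * (A.1 * Q * star A.1) = A.1 * (P * Q) * star A.1 := by
    intro P Q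
    calc _ = A.1 * P * (star A.1 * A.1) * Q * star A.1 := by simp only [mul_assoc]
      _ = _ := by rw [sp_mul]; simp only [mul_assoc, one_mul]
  simp only [jmulR, conjEquiv_apply, h]
  simp [mul_add, add_mul]

def phiH : unitary M3 →* F4H where
  toFun A := ⟨conjEquiv A, conjEquiv_mem A⟩
  map_one' := by
    apply Subtype.ext
    apply LinearEquiv.ext
    intro X
    exact conjLin_one X
  map_mul' A B := by
    apply Subtype.ext
    apply LinearEquiv.ext
    intro X
    exact (conjLin_mul _ _ X).symm

lemma phiH_apply (A : unitary M3) (X : JH) :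
    ((phiH A : JH ≃ₗ[ℝ] JH) X).1 = A.1 * X.1 * star A.1 := rfl

/-- diagonal idempotents -/
def Ed (i : Fin 3) : JH := ⟨single i i 1, by
  rw [mem_JH, conjTranspose_single, star_one]⟩

/-- off-diagonal elements -/
def Xo (i j : Fin 3) (q : HR) : JH := ⟨single i j q + single j i (star q), by
  rw [mem_JH, conjTranspose_add, conjTranspose_single, conjTranspose_single, star_star, add_comm]⟩

lemma herm (X : JH) (i j : Fin 3) : star (X.1 i j) = X.1 j i := by
  have h : (X.1)ᴴ = X.1 := X.2
  conv_rhs => rw [← h]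
  rfl

lemma self_adj_real (q : HR) (h : star q = q) : q = (q.re : HR) := by
  have := (Quaternion.star_eq_self).1 h
  exact this

lemma decomp (X : JH) : X = (X.1 0 0).re • Ed 0 + (X.1 1 1).re • Ed 1 + (X.1 2 2).re • Ed 2
    + Xo 0 1 (X.1 0 1) + Xo 0 2 (X.1 0 2) + Xo 1 2 (X.1 1 2) := by
  apply Subtype.ext
  ext1 i j
  have h0 := self_adj_real _ (herm X 0 0)
  have h1 := self_adj_real _ (herm X 1 1)
  have h2 := self_adj_real _ (herm X 2 2)
  fin_cases i <;> fin_cases j <;> simp [Ed, Xo, herm, rsmul_one] <;> assumption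

lemma ker_aux (A : unitary M3) (h : ∀ X : JH, A.1 * X.1 * star A.1 = X.1) : A.1 = 1 ∨ A.1 = -1 := by
  have hc : ∀ X : JH, A.1 * X.1 = X.1 * A.1 := by
    intro X
    calc A.1 * X.1 = A.1 * X.1 * (star A.1 * A.1) := by rw [sp_mul, mul_one]
      _ = A.1 * X.1 * star A.1 * A.1 := by simp only [mul_assoc]
      _ = _ := by rw [h]
  have hd : ∀ i j, i ≠ j → A.1 i j = 0 := by
    intro i j hij
    have := congrFun (congrFun (hc (Ed i)) i) j
    simpa [Ed, hij, hij.symm, Matrix.mul_apply, single_apply] using this.symm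
  have hq : ∀ i j, i ≠ j → ∀ q : HR, A.1 i i * q = q * A.1 j j := by
    intro i j hij q
    have := congrFun (congrFun (hc (Xo i j q)) i) j
    simpa [Xo, hij, hij.symm, Matrix.mul_apply, single_apply, mul_add, add_mul, Finset.sum_add_distrib] using this
  have e1 : A.1 0 0 = A.1 1 1 := by simpa using hq 0 1 (by decide) 1
  have e2 : A.1 0 0 = A.1 2 2 := by simpa using hq 0 2 (by decide) 1
  have hre : A.1 0 0 = ((A.1 0 0).re : HR) := by
    have hI := hq 0 1 (by decide) qI
    have hJ := hq 0 1 (by decide) qJ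
    rw [← e1] at hI hJ
    rw [Quaternion.ext_iff] at hI hJ
    simp at hI hJ
    apply Quaternion.ext <;> simp <;> linarith [hI.1, hI.2, hJ.1, hJ.2]
  have hn : (A.1 * star A.1) 0 0 = (1 : M3) 0 0 := by rw [sp_mul']
  simp only [Matrix.mul_apply, Fin.sum_univ_three, hd 0 1 (by decide), hd 0 2 (by decide), star_apply] at hn
  rw [hre] at hn
  set r := (A.1 0 0).re
  have hr : r * r = 1 := by
    have := congrArg QuaternionAlgebra.re hn
    simpa using this
  have key : A.1 = (r : HR) • (1 : M3) := by
    ext1 i j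
    by_cases hij : i = j
    · subst hij
      fin_cases i <;> simp [← e1, ← e2] <;> exact hre
    · simp [hd i j hij, hij]
  rcases mul_self_eq_one_iff.1 hr with h1 | h1
  · left; rw [key, h1]; simp
  · right; rw [key, h1]; simp

/-- Skolem-Noether for quaternions, unit version. -/
lemma skolem (f : HR →ₗ[ℝ] HR) (h1 : f 1 = 1) (hm : ∀ p q, f (p * q) = f p * f q) :
    ∃ a : HR, star a * a = 1 ∧ ∀ q, f q * a = a * q := by
  set I := qI with hI
  set J := qJ with hJ
  set K := qK with hK
  have II : I * I = -1 := by apply Quaternion.ext <;> simp [hI, hJ, hK]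
  have JJ : J * J = -1 := by apply Quaternion.ext <;> simp [hI, hJ, hK]
  have KK : K * K = -1 := by apply Quaternion.ext <;> simp [hI, hJ, hK]
  have IJ : I * J = K := by apply Quaternion.ext <;> simp [hI, hJ, hK]
  have JK : J * K = I := by apply Quaternion.ext <;> simp [hI, hJ, hK]
  have KI : K * I = J := by apply Quaternion.ext <;> simp [hI, hJ, hK]
  have JI : J * I = -K := by apply Quaternion.ext <;> simp [hI, hJ, hK]
  have KJ : K * J = -I := by apply Quaternion.ext <;> simp [hI, hJ, hK]
  have IK : I * K = -J := by apply Quaternion.ext <;> simp [hI, hJ, hK]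
  have hdec : ∀ q : HR, q = q.re • (1 : HR) + q.imI • I + q.imJ • J + q.imK • K := by
    intro q; apply Quaternion.ext <;> simp [hI, hJ, hK]
  let T : HR → HR := fun x => x - f I * x * I - f J * x * J - f K * x * K
  have tI : ∀ x, f I * T x = T x * I := by
    intro x
    have a1 : ∀ y, f I * (f I * y) = - y := fun y => by rw [← mul_assoc, ← hm, II, map_neg, h1]; simp
    have a2 : ∀ y, f I * (f J * y) = f K * y := fun y => by rw [← mul_assoc, ← hm, IJ]
    have a3 : ∀ y, f I * (f K * y) = - (f J * y) := fun y => by rw [← mul_assoc, ← hm, IK, map_neg]; simp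
    simp only [T, mul_sub, sub_mul, mul_assoc, a1, a2, a3, II, JI, KI, mul_neg, mul_one]
    abel
  have tJ : ∀ x, f J * T x = T x * J := by
    intro x
    have a1 : ∀ y, f J * (f I * y) = - (f K * y) := fun y => by rw [← mul_assoc, ← hm, JI, map_neg]; simp
    have a2 : ∀ y, f J * (f J * y) = - y := fun y => by rw [← mul_assoc, ← hm, JJ, map_neg, h1]; simp
    have a3 : ∀ y, f J * (f K * y) = (f I * y) := fun y => by rw [← mul_assoc, ← hm, JK]
    simp only [T, mul_sub, sub_mul, mul_assoc, a1, a2, a3, IJ, JJ, KJ, mul_neg, mul_one]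
    abel
  have tK : ∀ x, f K * T x = T x * K := by
    intro x
    rw [← IJ, hm, mul_assoc, tJ, ← mul_assoc, tI, mul_assoc]
  have hne : ∃ x, T x ≠ 0 := by
    by_contra hcon
    push Not at hcon
    have s : T 1 - T I * I - T J * J - T K * K = 1 + 1 + 1 + 1 := by
      simp only [T, sub_mul, mul_assoc, II, JJ, KK, IJ, JK, KI, JI, KJ, IK, mul_neg, mul_one, one_mul, neg_mul, neg_neg]
      abel
    rw [hcon, hcon, hcon, hcon] at s
    have := congrArg QuaternionAlgebra.re s
    simp at this
    norm_num at this
  obtain ⟨x, hx⟩ := hne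
  have hall : ∀ q, f q * T x = T x * q := by
    intro q
    conv_lhs => rw [hdec q]
    conv_rhs => rw [hdec q]
    simp only [map_add, map_smul, h1, add_mul, mul_add, smul_mul_assoc, mul_smul_comm, tI, tJ, tK, one_mul, mul_one]
  refine ⟨‖T x‖⁻¹ • T x, ?_, ?_⟩
  · have hn : ‖T x‖ ≠ 0 := norm_ne_zero_iff.2 hx
    rw [star_rsmul, smul_mul_assoc, mul_smul_comm, Quaternion.star_mul_self, Quaternion.normSq_eq_norm_mul_self, smul_smul]
    rw [← rsmul_one, smul_smul]
    field_simp
    simp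
  · intro q
    rw [mul_smul_comm, smul_mul_assoc, hall]

lemma jord {α : JH ≃ₗ[ℝ] JH} (hα : α ∈ F4H) (X Y Z : JH) (h : X.1 * Y.1 + Y.1 * X.1 = Z.1) :
    (α X).1 * (α Y).1 + (α Y).1 * (α X).1 = (α Z).1 := by
  have h1 : jmulR X Y = (2⁻¹ : ℝ) • Z := by
    apply Subtype.ext
    simp only [jmulR, h]
    rfl
  have h2 := hα X Y
  rw [h1, map_smul] at h2
  have h3 : (2⁻¹ : ℝ) • (α Z).1 = (2⁻¹ : ℝ) • ((α X).1 * (α Y).1 + (α Y).1 * (α X).1) :=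
    congrArg Subtype.val h2
  exact (smul_right_injective M3 (by norm_num : (2⁻¹ : ℝ) ≠ 0) h3).symm

lemma Ed_ne (i : Fin 3) : Ed i ≠ 0 := by
  intro h
  have h1 : (Ed i).1 i i = (0 : M3) i i := by rw [h]; rfl
  simp [Ed] at h1

lemma double_inj {A B : M3} (h : A + A = B + B) : A = B := by
  rw [← two_smul ℝ A, ← two_smul ℝ B] at h
  exact smul_right_injective M3 (by norm_num : (2 : ℝ) ≠ 0) h

lemma e_idem {α : JH ≃ₗ[ℝ] JH} (hα : α ∈ F4H) (i : Fin 3) :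
    (α (Ed i)).1 * (α (Ed i)).1 = (α (Ed i)).1 := by
  have h := jord hα (Ed i) (Ed i) (Ed i + Ed i) (by simp [Ed])
  rw [map_add] at h
  exact double_inj h

lemma e_orth {α : JH ≃ₗ[ℝ] JH} (hα : α ∈ F4H) (i j : Fin 3) (hij : i ≠ j) :
    (α (Ed i)).1 * (α (Ed j)).1 = 0 := by
  have h := jord hα (Ed i) (Ed j) 0 (by simp [Ed, hij, hij.symm])
  rw [map_zero] at h
  have hi := e_idem hα i
  generalize (α (Ed i)).1 = e at *
  generalize (α (Ed j)).1 = f at *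
  have h0 : e * f + f * e = 0 := h
  have h1 : e * f + e * f * e = 0 := by
    calc _ = (e * e) * f + e * f * e := by rw [hi]
      _ = e * (e * f + f * e) := by simp only [mul_add, mul_assoc]
      _ = 0 := by rw [h0, mul_zero]
  have h2 : e * f * e + f * e = 0 := by
    calc _ = e * f * e + f * (e * e) := by rw [hi]
      _ = (e * f + f * e) * e := by simp only [add_mul, mul_assoc]
      _ = 0 := by rw [h0, zero_mul]
  have h3 : e * f = f * e := by
    rw [add_comm] at h2
    exact (eq_neg_of_add_eq_zero_left h1).trans (eq_neg_of_add_eq_zero_left h2).symm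
  rw [← h3] at h0
  apply double_inj
  rw [h0, add_zero]

lemma exists_vec (e : M3) (he : e * e = e) (hne : e ≠ 0) :
    ∃ v : Fin 3 → HR, (∑ k, star (v k) * v k = 1) ∧ e *ᵥ v = v := by
  obtain ⟨k0, l, hkl⟩ : ∃ k l, e k l ≠ 0 := by
    by_contra hcon
    push Not at hcon
    exact hne (Matrix.ext hcon)
  let n : ℝ := ∑ k, Quaternion.normSq (e k l)
  have hn : 0 < n := by
    apply Finset.sum_pos' (fun k _ => Quaternion.normSq_nonneg)
    exact ⟨k0, Finset.mem_univ _, lt_of_le_of_ne Quaternion.normSq_nonneg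
      (Ne.symm (Quaternion.normSq_ne_zero.2 hkl))⟩
  refine ⟨fun k => (Real.sqrt n)⁻¹ • e k l, ?_, ?_⟩
  · simp only [star_rsmul, smul_mul_assoc, mul_smul_comm, smul_smul, Quaternion.star_mul_self]
    rw [← Finset.smul_sum]
    have h1 : ∑ k, ((Quaternion.normSq (e k l) : ℝ) : HR) = ((n : ℝ) : HR) := by
      simp only [n, ← rsmul_one, Finset.sum_smul]
    rw [h1, ← rsmul_one, smul_smul, ← mul_inv, Real.mul_self_sqrt hn.le, inv_mul_cancel₀ hn.ne', one_smul]
  · ext1 k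
    have h2 : (e * e) k l = e k l := by rw [he]
    simp only [Matrix.mulVec, dotProduct, mul_smul_comm]
    rw [← Finset.smul_sum]
    rw [← h2]
    rfl

lemma step1 {α : JH ≃ₗ[ℝ] JH} (hα : α ∈ F4H) :
    ∃ U : unitary M3, ∀ i, α (Ed i) = (phiH U : JH ≃ₗ[ℝ] JH) (Ed i) := by
  have hv : ∀ i, ∃ v : Fin 3 → HR, (∑ k, star (v k) * v k = 1) ∧ (α (Ed i)).1 *ᵥ v = v := by
    intro i
    apply exists_vec _ (e_idem hα i)
    intro h
    apply Ed_ne i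
    apply α.injective
    rw [map_zero]
    exact Subtype.ext h
  choose v hv1 hv2 using hv
  let U : M3 := Matrix.of fun k i => v i k
  have hU : ∀ i, (α (Ed i)).1 * U = U * (Ed i).1 := by
    intro i
    ext1 k j
    have h1 : ((α (Ed i)).1 * U) k j = ((α (Ed i)).1 *ᵥ v j) k := rfl
    rw [h1]
    by_cases hij : i = j
    · subst hij
      rw [hv2]
      simp [Ed, U]
    · rw [← hv2 j, Matrix.mulVec_mulVec, e_orth hα i j hij]
      simp [Ed, U, Ne.symm hij]
  have hs : ∀ X : JH, star X.1 = X.1 := fun X => X.2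
  have hU' : ∀ i, star U * (α (Ed i)).1 = (Ed i).1 * star U := by
    intro i
    have := congrArg star (hU i)
    rwa [star_mul, star_mul, hs, hs] at this
  have hG : star U * U = 1 := by
    ext1 i j
    by_cases hij : i = j
    · subst hij
      rw [Matrix.one_apply_eq, ← hv1 i]
      rfl
    · have h1 : (Ed i).1 * (star U * U) = (star U * U) * (Ed i).1 := by
        rw [← mul_assoc, ← hU', mul_assoc, hU, mul_assoc]
      have h2 : ((Ed i).1 * (star U * U)) i j = ((star U * U) * (Ed i).1) i j := by rw [h1]
      rw [Matrix.one_apply_ne hij]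
      generalize star U * U = G at *
      simpa [Ed, Ne.symm hij] using h2
  have hG' : U * star U = 1 := mul_eq_one_comm.1 hG
  refine ⟨⟨U, Unitary.mem_iff.2 ⟨hG, hG'⟩⟩, fun i => ?_⟩
  apply Subtype.ext
  rw [phiH_apply]
  change _ = U * (Ed i).1 * star U
  rw [← hU, mul_assoc, hG', mul_one]

lemma peirce_JH (M : JH) (i j : Fin 3) (hij : i ≠ j)
    (h1 : (Ed i).1 * M.1 + M.1 * (Ed i).1 = M.1) (h2 : (Ed j).1 * M.1 + M.1 * (Ed j).1 = M.1) :
    M = Xo i j (M.1 i j) := by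
  have key : ∀ (m : Fin 3), (Ed m).1 * M.1 + M.1 * (Ed m).1 = M.1 → ∀ k l,
      (if k = m then M.1 k l else 0) + (if l = m then M.1 k l else 0) = M.1 k l := by
    intro m hm k l
    have h3 : ((Ed m).1 * M.1 + M.1 * (Ed m).1) k l = M.1 k l := by rw [hm]
    refine Eq.trans ?_ h3
    rw [Matrix.add_apply]
    congr 1
    · by_cases h : k = m
      · subst h; simp [Ed]
      · simp [Ed, h]
    · by_cases h : l = m
      · subst h; simp [Ed]
      · simp [Ed, h]
  apply Subtype.ext
  ext1 k l
  have a1 := key i h1 k l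
  have a2 := key j h2 k l
  by_cases b1 : k = i <;> by_cases b2 : l = i <;> by_cases b3 : k = j <;> by_cases b4 : l = j <;>
    simp_all [Xo, herm, single_apply]

lemma Xo_apply (i j : Fin 3) (hij : i ≠ j) (q : HR) : (Xo i j q).1 i j = q := by
  simp [Xo, hij.symm]

lemma Xo_peirce (i j : Fin 3) (hij : i ≠ j) (q : HR) :
    (Ed i).1 * (Xo i j q).1 + (Xo i j q).1 * (Ed i).1 = (Xo i j q).1 ∧
    (Ed j).1 * (Xo i j q).1 + (Xo i j q).1 * (Ed j).1 = (Xo i j q).1 := by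
  constructor <;> simp [Ed, Xo, mul_add, add_mul, hij, hij.symm, add_comm]

lemma Xo_image {β : JH ≃ₗ[ℝ] JH} (hβ : β ∈ F4H) (hE : ∀ i, β (Ed i) = Ed i)
    (i j : Fin 3) (hij : i ≠ j) (q : HR) : β (Xo i j q) = Xo i j ((β (Xo i j q)).1 i j) := by
  apply peirce_JH _ _ _ hij
  · have := jord hβ _ _ _ (Xo_peirce i j hij q).1
    rwa [hE] at this
  · have := jord hβ _ _ _ (Xo_peirce i j hij q).2
    rwa [hE] at this

/-- coordinate functions -/
def fij (β : JH ≃ₗ[ℝ] JH) (i j : Fin 3) : HR →ₗ[ℝ] HR where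
  toFun q := (β (Xo i j q)).1 i j
  map_add' p q := by
    have : Xo i j (p + q) = Xo i j p + Xo i j q := by
      apply Subtype.ext
      simp only [Xo, star_add, single_add, Submodule.coe_add]
      abel
    rw [this, map_add]
    rfl
  map_smul' r q := by
    have : Xo i j (r • q) = r • Xo i j q := by
      apply Subtype.ext
      simp only [Xo, star_rsmul, ← smul_single, Submodule.coe_smul, smul_add]
    rw [this, map_smul]
    rfl

lemma fij_spec {β : JH ≃ₗ[ℝ] JH} (hβ : β ∈ F4H) (hE : ∀ i, β (Ed i) = Ed i)
    (i j : Fin 3) (hij : i ≠ j) (q : HR) : β (Xo i j q) = Xo i j (fij β i j q) :=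
  Xo_image hβ hE i j hij q

lemma fij_mul {β : JH ≃ₗ[ℝ] JH} (hβ : β ∈ F4H) (hE : ∀ i, β (Ed i) = Ed i) (p q : HR) :
    fij β 0 2 (p * q) = fij β 0 1 p * fij β 1 2 q := by
  have hX : ∀ p q : HR, (Xo 0 1 p).1 * (Xo 1 2 q).1 + (Xo 1 2 q).1 * (Xo 0 1 p).1
      = (Xo 0 2 (p * q)).1 := by
    intro p q
    simp [Xo, mul_add, add_mul]
  have h := jord hβ _ _ _ (hX p q)
  rw [fij_spec hβ hE 0 1 (by decide), fij_spec hβ hE 1 2 (by decide), hX,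
    fij_spec hβ hE 0 2 (by decide)] at h
  have h2 := Xo_apply 0 2 (by decide) (fij β 0 2 (p * q))
  rw [← h, Xo_apply 0 2 (by decide)] at h2
  exact h2.symm

lemma fij_unit {β : JH ≃ₗ[ℝ] JH} (hβ : β ∈ F4H) (hE : ∀ i, β (Ed i) = Ed i)
    (i j : Fin 3) (hij : i ≠ j) : fij β i j 1 * star (fij β i j 1) = 1 := by
  have hX : ∀ q : HR, ((Xo i j q).1 * (Xo i j q).1 + (Xo i j q).1 * (Xo i j q).1) i i
      = q * star q + q * star q := by
    intro q
    simp [Xo, mul_add, add_mul, hij, hij.symm]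
  have h1 : (Xo i j 1).1 * (Xo i j 1).1 + (Xo i j 1).1 * (Xo i j 1).1
      = (Ed i + Ed j + (Ed i + Ed j)).1 := by
    simp [Xo, Ed, mul_add, add_mul, hij, hij.symm]
    abel
  have h := jord hβ _ _ _ h1
  rw [fij_spec hβ hE i j hij, map_add, map_add, hE, hE, ← h1] at h
  have h2 := hX (fij β i j 1)
  rw [h, hX] at h2
  rw [← two_smul ℝ, ← two_smul ℝ (fij β i j 1 * _)] at h2
  have h3 := smul_right_injective HR (by norm_num : (2 : ℝ) ≠ 0) h2
  rw [← h3]; simp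

lemma diag_unitary (d : Fin 3 → HR) (hd : ∀ i, star (d i) * d i = 1) :
    (diagonal d : M3) ∈ unitary M3 := by
  have h1 : star (diagonal d : M3) * diagonal d = 1 := by
    rw [star_eq_conjTranspose, diagonal_conjTranspose, diagonal_mul_diagonal, ← diagonal_one]
    congr 1
    ext1 i
    exact hd i
  exact Unitary.mem_iff.2 ⟨h1, mul_eq_one_comm.1 h1⟩

lemma diag_Xo (d : Fin 3 → HR) (hd : ∀ i, star (d i) * d i = 1) (i j : Fin 3) (q : HR) :
    (phiH ⟨_, diag_unitary d hd⟩ : JH ≃ₗ[ℝ] JH) (Xo i j q) = Xo i j (d i * q * star (d j)) := by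
  apply Subtype.ext
  rw [phiH_apply]
  ext1 k l
  simp only [star_eq_conjTranspose, diagonal_conjTranspose, mul_diagonal, diagonal_mul, Xo,
    Matrix.add_apply, single_apply, mul_add, add_mul, star_mul, star_star, Pi.star_apply]
  congr 1 <;> split_ifs with h <;> simp [mul_assoc] <;> simp [h.1, h.2]

lemma diag_Ed (d : Fin 3 → HR) (hd : ∀ i, star (d i) * d i = 1) (i : Fin 3) :
    (phiH ⟨_, diag_unitary d hd⟩ : JH ≃ₗ[ℝ] JH) (Ed i) = Ed i := by
  apply Subtype.ext
  rw [phiH_apply]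
  ext1 k l
  simp only [star_eq_conjTranspose, diagonal_conjTranspose, mul_diagonal, diagonal_mul, Ed,
    single_apply, Pi.star_apply]
  split_ifs with h
  · rw [← h.1, ← h.2, mul_one, mul_eq_one_comm.1 (hd i)]
  · simp

lemma step2 {β : JH ≃ₗ[ℝ] JH} (hβ : β ∈ F4H) (hE : ∀ i, β (Ed i) = Ed i) :
    ∃ U : unitary M3, (phiH U : JH ≃ₗ[ℝ] JH) = β := by
  have hm := fij_mul hβ hE
  have hu := fij_unit hβ hE 0 1 (by decide)
  have hw := fij_unit hβ hE 1 2 (by decide)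
  have s01 := fij_spec hβ hE 0 1 (by decide)
  have s02 := fij_spec hβ hE 0 2 (by decide)
  have s12 := fij_spec hβ hE 1 2 (by decide)
  generalize fij β 0 1 = f01 at *
  generalize fij β 0 2 = f02 at *
  generalize fij β 1 2 = f12 at *
  set u := f01 1 with hud
  set w := f12 1 with hwd
  have hu' : star u * u = 1 := mul_eq_one_comm.1 hu
  have hw' : star w * w = 1 := mul_eq_one_comm.1 hw
  have e02 : ∀ q, f02 q = f01 q * w := fun q => by rw [hwd, ← hm, mul_one]
  have e12 : ∀ q, f12 q = star u * f01 q * w := fun q => by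
    have h1 : f02 q = u * f12 q := by rw [hud, ← hm, one_mul]
    rw [mul_assoc, ← e02, h1, ← mul_assoc, hu', one_mul]
  have e01 : ∀ p q, f01 (p * q) = f01 p * star u * f01 q := fun p q => by
    have h1 := hm p q
    rw [e02, e12] at h1
    calc f01 (p * q) = f01 (p * q) * w * star w := by rw [mul_assoc, hw, mul_one]
      _ = f01 p * star u * f01 q * (w * star w) := by rw [h1]; simp only [mul_assoc]
      _ = _ := by rw [hw, mul_one]
  let g : HR →ₗ[ℝ] HR := (LinearMap.mulRight ℝ (star u)).comp f01
  have hg : ∀ q, g q = f01 q * star u := fun q => rfl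
  obtain ⟨a, ha, hag⟩ := skolem g (by rw [hg]; exact hu) (fun p q => by
    rw [hg, hg, hg, e01]; simp only [mul_assoc])
  have ha' : a * star a = 1 := mul_eq_one_comm.1 ha
  have k01 : ∀ q, f01 q = a * q * star a * u := fun q => by
    rw [← hag, hg, mul_assoc _ a, ha', mul_one, mul_assoc, hu']; simp
  let d : Fin 3 → HR := ![a, star u * a, star (u * w) * a]
  have aux : ∀ p : HR, p * star p = 1 → star (star p * a) * (star p * a) = 1 := fun p hp => by
    calc _ = star a * (p * star p) * a := by simp only [star_mul, star_star, mul_assoc]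
      _ = 1 := by rw [hp, mul_one, ha]
  have hd : ∀ i, star (d i) * d i = 1 := by
    intro i
    fin_cases i
    · exact ha
    · exact aux u hu
    · apply aux (u * w)
      rw [star_mul, mul_assoc, ← mul_assoc w, hw, one_mul, hu]
  refine ⟨⟨_, diag_unitary d hd⟩, ?_⟩
  apply LinearEquiv.ext
  intro X
  rw [decomp X]
  have hEd := diag_Ed d hd
  have hXo := diag_Xo d hd
  generalize (phiH ⟨_, diag_unitary d hd⟩ : JH ≃ₗ[ℝ] JH) = γ at *
  simp only [map_add, map_smul, hE, hEd, hXo, s01, s02, s12]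
  have d0 : d 0 = a := rfl
  have d1 : d 1 = star u * a := rfl
  have d2 : d 2 = star (u * w) * a := rfl
  simp only [d0, d1, d2, e02, e12, k01, star_mul, star_star, mul_assoc]

lemma phiH_surj : Function.Surjective phiH := by
  intro α
  obtain ⟨U, hU⟩ := step1 α.2
  let β : F4H := (phiH U)⁻¹ * α
  obtain ⟨V, hV⟩ := step2 β.2 (fun i => by
    have h1 : (β : JH ≃ₗ[ℝ] JH) (Ed i) = (phiH U : JH ≃ₗ[ℝ] JH).symm ((α : JH ≃ₗ[ℝ] JH) (Ed i)) := rfl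
    rw [h1, hU, LinearEquiv.symm_apply_apply])
  refine ⟨U * V, ?_⟩
  have hV' : phiH V = β := Subtype.ext hV
  rw [map_mul, hV']
  simp [β]

theorem statement3 :
    ∃ φ : unitary (Matrix (Fin 3) (Fin 3) HR) →* F4H,
      (∀ (A : unitary (Matrix (Fin 3) (Fin 3) HR)) (X : JH),
        ((φ A : JH ≃ₗ[ℝ] JH) X).1 = A.1 * X.1 * star A.1) ∧
      Function.Surjective φ ∧
      (∀ A : unitary (Matrix (Fin 3) (Fin 3) HR),
        A ∈ φ.ker ↔ (A.1 = 1 ∨ A.1 = -1)) ∧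
      Nonempty (F4H ≃* unitary (Matrix (Fin 3) (Fin 3) HR) ⧸ φ.ker) := by
  refine ⟨phiH, phiH_apply, phiH_surj, fun A => ⟨fun hA => ?_, fun hA => ?_⟩,
    ⟨(QuotientGroup.quotientKerEquivOfSurjective phiH phiH_surj).symm⟩⟩
  · apply ker_aux
    intro X
    rw [← phiH_apply, MonoidHom.mem_ker.1 hA]
    rfl
  · rw [MonoidHom.mem_ker]
    apply Subtype.ext
    apply LinearEquiv.ext
    intro X
    apply Subtype.ext
    rw [phiH_apply]
    rcases hA with h | h <;> rw [h] <;> simp
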